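/- There exists a class of languages learnable by a dual monotone behaviorally correct full-information learner from informants but not by any monotone one: [Inf G Mon^d Bc] \ [Inf G Mon Bc] ≠ ∅; in fact the class consisting of X = 2ℕ (the even numbers), all Y_n = {2n+1} ∪ {2i | i ≤ n}, and all Z_{n,m} = Y_n ∪ {2m} for n < m witnesses this separation. -/

import Mathlib

open Filter Classical

namespace InfBc

/-! ### Basic notions: r.e. sets, informants, learners -/

/-- The `e`-th recursively enumerable set (via an acceptable numbering of
partial computable functions, `W e = dom φ_e`). -/
def W (e : ℕ) : Set ℕ := {x | ((Denumerable.ofNat Nat.Partrec.Code e).eval x).Dom}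

/-- A language is recursively enumerable. -/
def RE (L : Set ℕ) : Prop := ∃ e, W e = L

abbrev Datum := ℕ × Bool
abbrev Seq := List Datum
abbrev Informant := ℕ → Datum
abbrev HypSeq := ℕ → Part ℕ
/-- Learners are partial functions; all input types are coded into `ℕ`. -/
abbrev Learner := ℕ →. ℕ
abbrev Restriction := HypSeq → Informant → Prop

/-- Positive information of an infinite sequence. -/
def posI (I : Informant) : Set ℕ := {x | ∃ n, I n = (x, true)}
/-- Negative information of an infinite sequence. -/
def negI (I : Informant) : Set ℕ := {x | ∃ n, I n = (x, false)}

/-- `I` is an informant for the language `L`. -/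
def IsInformant (I : Informant) (L : Set ℕ) : Prop := posI I = L ∧ negI I = Lᶜ

/-- `I` is an informant (for some language), i.e. `I ∈ Inf`. -/
def IsInf (I : Informant) : Prop := IsInformant I (posI I)

/-- `I` is a canonical informant. -/
def Canonical (I : Informant) : Prop := ∀ x, I x = (x, true) ∨ I x = (x, false)

/-- `I[n]`, the length-`n` initial segment of `I`. -/
def segment (I : Informant) (n : ℕ) : Seq := (List.range n).map I

/-- Positive information of a finite sequence. -/
def posS (σ : Seq) : Set ℕ := {x | (x, true) ∈ σ}
/-- Negative information of a finite sequence. -/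
def negS (σ : Seq) : Set ℕ := {x | (x, false) ∈ σ}
/-- The content of a finite sequence, as a set. -/
def contentS (σ : Seq) : Set Datum := {a | a ∈ σ}

/-! ### Interaction operators -/

abbrev InteractionOperator := Learner → Informant → HypSeq

/-- Full-information (Gold-style) interaction: `G(h,I)(i) = h(I[i])`. -/
def Gop : InteractionOperator := fun h I i => h (Encodable.encode (segment I i))

/-- Set-driven interaction: `Sd(h,I)(i) = h(content(I[i]))`. -/
def Sdop : InteractionOperator := fun h I i => h (Encodable.encode (segment I i).toFinset)

/-- The iterated evaluation of an iterative learner on a finite sequence: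
start with the initial hypothesis `h(none)` and feed the data one by one. -/
def iterExtend (h : Learner) (σ : Seq) : Part ℕ :=
  σ.foldl (fun pe a => pe.bind fun e => h (Encodable.encode (some (e, a))))
    (h (Encodable.encode (none : Option (ℕ × Datum))))

/-- Iterative interaction: `It(h,I)(i)` is obtained by feeding `I[i]` one datum
at a time, each time updating the previous hypothesis. -/
def Itop : InteractionOperator := fun h I i => iterExtend h (segment I i)

/-- An iterative learner is confluent if the order and multiplicity in which
the content is presented does not matter. -/
def ConfluentLearner (h : Learner) : Prop :=
  ∀ σ τ : Seq, contentS σ = contentS τ → iterExtend h σ = iterExtend h τ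

/-- Confluently iterative interaction. -/
noncomputable def CflItop : InteractionOperator := fun h I i =>
  if ConfluentLearner h then iterExtend h (segment I i) else Part.none

/-- `β ≼ β'`: every (partial computable) `β`-learner can be translated into a
`β'`-learner with the same hypothesis sequence on every informant. -/
def OpLe (β β' : InteractionOperator) : Prop :=
  ∀ h : Learner, Partrec h → ∃ h' : Learner, Partrec h' ∧
    ∀ I : Informant, IsInf I → ∀ n, β h I n = β' h' I n

/-! ### Learning restrictions -/

/-- The trivial restriction `T`. -/
def TT : Restriction := fun _ _ => True

/-- Explanatory identification. -/
def Ex : Restriction := fun p I =>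
  ∃ q, W q = posI I ∧ ∀ᶠ n in atTop, p n = Part.some q

/-- Behaviorally correct identification. -/
def Bc : Restriction := fun p I => ∀ᶠ n in atTop, ∃ e ∈ p n, W e = posI I

/-- Consistency of a hypothesis with a finite sequence of data. -/
def ConsH (e : ℕ) (σ : Seq) : Prop := posS σ ⊆ W e ∧ negS σ ∩ W e = ∅

/-- Consistency of a hypothesis sequence with an informant. -/
def Cons : Restriction := fun p I => ∀ n, ∃ e ∈ p n, ConsH e (segment I n)

/-- Strongly monotone. -/
def SMon : Restriction := fun p _ =>
  ∀ s t, s ≤ t → ∀ e ∈ p s, ∀ e' ∈ p t, W e ⊆ W e'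

/-- Dual strongly monotone. -/
def SMond : Restriction := fun p _ =>
  ∀ s t, s ≤ t → ∀ e ∈ p s, ∀ e' ∈ p t, W e' ⊆ W e

/-- Monotone. -/
def Mon : Restriction := fun p I =>
  ∀ s t, s ≤ t → ∀ e ∈ p s, ∀ e' ∈ p t, W e ∩ posI I ⊆ W e' ∩ posI I

/-- Dual monotone. -/
def Mond : Restriction := fun p I =>
  ∀ s t, s ≤ t → ∀ e ∈ p s, ∀ e' ∈ p t, (W e)ᶜ ∩ negI I ⊆ (W e')ᶜ ∩ negI I

/-- Weakly monotone. -/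
def WMon : Restriction := fun p I =>
  ∀ s t, s ≤ t → ∀ e ∈ p s, ConsH e (segment I t) → ∀ e' ∈ p t, W e ⊆ W e'

/-- Dual weakly monotone. -/
def WMond : Restriction := fun p I =>
  ∀ s t, s ≤ t → ∀ e ∈ p s, ConsH e (segment I t) → ∀ e' ∈ p t, W e' ⊆ W e

/-- Cautious. -/
def Caut : Restriction := fun p _ =>
  ∀ s t, s < t → ∀ e ∈ p s, ∀ e' ∈ p t, ¬ W e' ⊂ W e

/-- Target cautious. -/
def CautTar : Restriction := fun p I =>
  ∀ s, ∀ e ∈ p s, ¬ posI I ⊂ W e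

/-- Finitely cautious. -/
def CautFin : Restriction := fun p _ =>
  ∀ s t, s < t → ∀ e ∈ p s, ∀ e' ∈ p t, W e' ⊂ W e → (W e').Infinite

/-- Infinitely cautious. -/
def CautInf : Restriction := fun p _ =>
  ∀ s t, s < t → ∀ e ∈ p s, ∀ e' ∈ p t, W e' ⊂ W e → (W e').Finite

/-! ### Learnability -/

/-- The class of admissible learners: all partial computable learners. -/
def AllL : Learner → Prop := fun _ => True
/-- The class of admissible learners: total computable learners (`ℛ`). -/
def TotalL : Learner → Prop := fun h => ∀ x, (h x).Dom
/-- Admissible informants: all informants (`Inf`). -/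
def AllI : Informant → Prop := fun _ => True

/-- `h` learns `L` in the setting given by admissible informants `P`,
interaction operator `β` and local restriction `δ`. -/
def LearnsWith (P : Informant → Prop) (β : InteractionOperator) (δ : Restriction)
    (h : Learner) (L : Set ℕ) : Prop :=
  RE L ∧ ∀ I : Informant, P I → IsInformant I L → δ (β h I) I

/-- `[τ(α) C P β δ]`: the collection of all classes of languages learnable by
some learner in `C` that satisfies the global restriction `α` on all admissible
informants, under interaction operator `β` and local restriction `δ`. -/
def Learnable (α : Restriction) (C : Learner → Prop) (P : Informant → Prop)
    (β : InteractionOperator) (δ : Restriction) : Set (Set (Set ℕ)) :=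
  {𝓛 | ∃ h : Learner, Partrec h ∧ C h ∧
        (∀ I : Informant, IsInf I → P I → α (β h I) I) ∧
        ∀ L ∈ 𝓛, LearnsWith P β δ h L}

/-! ### Properties of restrictions -/

/-- A learning restriction is delayable if it is preserved under postponing
hypotheses along a non-decreasing unbounded function. -/
def Delayable (δ : Restriction) : Prop :=
  ∀ I I' : Informant, IsInf I → IsInf I' → Set.range I = Set.range I' →
    ∀ (p : HypSeq) (s : ℕ → ℕ), Monotone s → (∀ m, ∃ n, m ≤ s n) →
      δ p I → (∀ n, contentS (segment I (s n)) ⊆ contentS (segment I' n)) →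
      δ (fun n => p (s n)) I'

/-- A learning restriction is semantic if it is indifferent to replacing the
hypothesis sequence by a semantically equivalent one. -/
def Semantic (δ : Restriction) : Prop :=
  ∀ (p p' : HypSeq) (I : Informant), δ p I →
    (∀ i, (p i).Dom ↔ (p' i).Dom) →
    (∀ i, ∀ e ∈ p i, ∀ e' ∈ p' i, W e = W e') →
    δ p' I


/-- `X = 2ℕ`, the even numbers. -/
def X12 : Set ℕ := {x | ∃ i, x = 2 * i}

/-- `Y_n = {2n+1} ∪ {2i | i ≤ n}`. -/
def Y12 (n : ℕ) : Set ℕ := insert (2 * n + 1) {x | ∃ i, i ≤ n ∧ x = 2 * i}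

/-- `Z_{n,m} = Y_n ∪ {2m}`. -/
def Z12 (n m : ℕ) : Set ℕ := insert (2 * m) (Y12 n)

/-- The witness class consisting of `X`, all `Y_n` and all `Z_{n,m}` (`n < m`). -/
def class12 : Set (Set ℕ) :=
  {X12} ∪ {S | ∃ n, S = Y12 n} ∪ {S | ∃ n m, n < m ∧ S = Z12 n m}

/-- The set conjectured on the finite data sequence `σ`. -/
def Hyp (σ : Seq) (x : ℕ) : Prop :=
  (∃ a ∈ σ, a = (x, true)) ∨ (x % 2 = 0 ∧ ∀ a ∈ σ, a.2 = true → a.1 % 2 = 1 → x < a.1)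

theorem hyp_primrec : PrimrecRel Hyp := by
  have h1 : PrimrecRel fun (a : Datum) (x : ℕ) => a = (x, true) :=
    Primrec.eq.comp Primrec.fst (Primrec.snd.pair (Primrec.const true))
  have h2 : PrimrecRel fun (a : Datum) (x : ℕ) =>
      (¬ a.2 = true) ∨ (¬ a.1 % 2 = 1) ∨ x < a.1 := by
    refine PrimrecPred.or (PrimrecPred.not ?_) (PrimrecPred.or (PrimrecPred.not ?_) ?_)
    · exact Primrec.eq.comp (Primrec.snd.comp Primrec.fst) (Primrec.const true)
    · exact Primrec.eq.comp (Primrec.nat_mod.comp (Primrec.fst.comp Primrec.fst)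
        (Primrec.const 2)) (Primrec.const 1)
    · exact Primrec.nat_lt.comp Primrec.snd (Primrec.fst.comp Primrec.fst)
  have h3 : PrimrecPred fun p : Seq × ℕ => p.2 % 2 = 0 :=
    Primrec.eq.comp (Primrec.nat_mod.comp Primrec.snd (Primrec.const 2)) (Primrec.const 0)
  have h4 := PrimrecPred.or h1.exists_mem_list (PrimrecPred.and h3 h2.forall_mem_list)
  refine PrimrecPred.of_eq h4 ?_
  rintro ⟨σ, x⟩
  unfold Hyp
  have : ∀ a : Datum, ((¬ a.2 = true) ∨ (¬ a.1 % 2 = 1) ∨ x < a.1) ↔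
      (a.2 = true → a.1 % 2 = 1 → x < a.1) := by intro a; tauto
  simp only [this]

/-- A computable learner whose conjecture on `σ` is `Hyp σ`. -/
theorem exists_learner : ∃ g : ℕ → ℕ, Computable g ∧
    ∀ σ : Seq, W (g (Encodable.encode σ)) = {x | Hyp σ x} := by
  have hp : PrimrecPred fun n : ℕ =>
      Hyp (((Encodable.decode (α := Seq) n.unpair.1)).getD []) n.unpair.2 :=
    hyp_primrec.comp
      (Primrec.option_getD.comp (Primrec.decode.comp (Primrec.fst.comp Primrec.unpair))
        (Primrec.const []))
      (Primrec.snd.comp Primrec.unpair)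
  obtain ⟨i, hi⟩ := hp
  have hre := (ComputablePred.to_re ⟨i, hi.to_comp⟩)
  have hpart := Partrec.nat_iff.1 (Partrec.map hre ((Computable.const 0).to₂))
  obtain ⟨c, hc⟩ := Nat.Partrec.Code.exists_code.1 hpart
  refine ⟨fun n => Encodable.encode (Nat.Partrec.Code.curry c n), ?_, ?_⟩
  · exact (Primrec.encode.comp
      (Nat.Partrec.Code.primrec₂_curry.comp (Primrec.const c) Primrec.id)).to_comp
  · intro σ
    ext x
    simp only [W, Set.mem_setOf_eq, Denumerable.ofNat_encode, Nat.Partrec.Code.eval_curry, hc]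
    simp [Part.assert]

theorem mem_segment (I : Informant) (n : ℕ) (a : Datum) :
    a ∈ segment I n ↔ ∃ k < n, I k = a := by
  simp [segment]

theorem mem_posI_of_segment {I : Informant} {n x : ℕ} (h : (x, true) ∈ segment I n) :
    x ∈ posI I := by
  obtain ⟨k, -, hk⟩ := (mem_segment I n _).1 h
  exact ⟨k, hk⟩

theorem segment_mono (I : Informant) {s t : ℕ} (h : s ≤ t) {a : Datum}
    (ha : a ∈ segment I s) : a ∈ segment I t := by
  obtain ⟨k, hk, e⟩ := (mem_segment I s _).1 ha
  exact (mem_segment I t _).2 ⟨k, by omega, e⟩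

/-- The canonical informant of `L`. -/
noncomputable def canon (L : Set ℕ) : Informant := fun x => (x, decide (x ∈ L))

theorem canon_informant (L : Set ℕ) : IsInformant (canon L) L := by
  constructor
  · ext x; simp [posI, canon]
  · ext x; simp [negI, canon]

theorem canon_segment {L M : Set ℕ} {k : ℕ} (h : ∀ x < k, x ∈ L ↔ x ∈ M) :
    segment (canon L) k = segment (canon M) k := by
  unfold segment
  apply List.map_congr_left
  intro x hx
  simp [canon, h x (List.mem_range.1 hx)]

theorem mem_X (x : ℕ) : x ∈ X12 ↔ x % 2 = 0 :=
  ⟨fun ⟨i, hi⟩ => by omega, fun h => ⟨x / 2, by omega⟩⟩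

theorem mem_Y (n x : ℕ) : x ∈ Y12 n ↔ x = 2 * n + 1 ∨ (x % 2 = 0 ∧ x < 2 * n + 1) := by
  constructor
  · rintro (h | ⟨i, hi, h⟩)
    · exact Or.inl h
    · right; omega
  · rintro (h | h)
    · exact Or.inl h
    · exact Or.inr ⟨x / 2, by omega, by omega⟩

theorem mem_Z (n m x : ℕ) : x ∈ Z12 n m ↔
    x = 2 * m ∨ x = 2 * n + 1 ∨ (x % 2 = 0 ∧ x < 2 * n + 1) := by
  rw [← mem_Y]; rfl

/-- After finitely many data the conjecture is correct, when the target has exactly one odd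
element `z`, contains all even numbers below it and at most one other number `w`. -/
theorem hyp_eventually_odd {I : Informant} {z w : ℕ} (hz : z % 2 = 1)
    (hL : ∀ x, x ∈ posI I ↔ x = w ∨ x = z ∨ (x % 2 = 0 ∧ x < z)) (hw : w % 2 = 0 ∨ w = z) :
    ∀ᶠ n in atTop, {x | Hyp (segment I n) x} = posI I := by
  obtain ⟨i, hi⟩ := (hL z).2 (by simp)
  obtain ⟨j, hj⟩ := (hL w).2 (by simp)
  filter_upwards [eventually_ge_atTop (i + j + 1)] with n hn
  have hzs : (z, true) ∈ segment I n := (mem_segment _ _ _).2 ⟨i, by omega, hi⟩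
  have hws : (w, true) ∈ segment I n := (mem_segment _ _ _).2 ⟨j, by omega, hj⟩
  ext x
  constructor
  · rintro (⟨a, ha, rfl⟩ | ⟨h0, h⟩)
    · exact mem_posI_of_segment ha
    · exact (hL x).2 (Or.inr (Or.inr ⟨h0, h _ hzs rfl hz⟩))
  · intro hx
    rcases (hL x).1 hx with rfl | rfl | ⟨h0, h1⟩
    · exact Or.inl ⟨_, hws, rfl⟩
    · exact Or.inl ⟨_, hzs, rfl⟩
    · refine Or.inr ⟨h0, ?_⟩
      rintro ⟨y, b⟩ ha hb hy
      simp only at hb hy ⊢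
      subst hb
      have := (hL y).1 (mem_posI_of_segment ha)
      omega

theorem hyp_eventually {I : Informant} (hI : posI I ∈ class12) :
    ∀ᶠ n in atTop, {x | Hyp (segment I n) x} = posI I := by
  rcases hI with (hX | ⟨n, hY⟩) | ⟨n, m, -, hZ⟩
  · have hX' : posI I = X12 := hX
    refine Eventually.of_forall fun n => ?_
    ext x
    constructor
    · rintro (⟨a, ha, rfl⟩ | ⟨h0, h⟩)
      · exact mem_posI_of_segment ha
      · rw [hX']; exact (mem_X x).2 h0
    · intro hx
      refine Or.inr ⟨(mem_X x).1 (hX' ▸ hx), ?_⟩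
      rintro ⟨y, b⟩ ha hb hy
      simp only at hb hy ⊢
      subst hb
      have := (mem_X y).1 (hX' ▸ mem_posI_of_segment ha)
      omega
  · refine hyp_eventually_odd (z := 2 * n + 1) (w := 2 * n + 1) (by omega) ?_ (Or.inr rfl)
    intro x
    rw [hY, mem_Y]; tauto
  · refine hyp_eventually_odd (z := 2 * n + 1) (w := 2 * m) (by omega) ?_ (Or.inl (by omega))
    intro x
    rw [hZ, mem_Z]

/-- `class12` witnesses
`[Inf G Mon^d Bc] \ [Inf G Mon Bc] ≠ ∅`. -/
theorem dual_mon_minus_mon :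
    class12 ∈
      Learnable TT AllL AllI Gop (fun p I => Mond p I ∧ Bc p I) \
        Learnable TT AllL AllI Gop (fun p I => Mon p I ∧ Bc p I) := by
  constructor
  · obtain ⟨g, hg, hW⟩ := exists_learner
    have hBc : ∀ I : Informant, posI I ∈ class12 → Bc (Gop (g : ℕ →. ℕ) I) I := by
      intro I hI
      filter_upwards [hyp_eventually hI] with n hn
      exact ⟨g (Encodable.encode (segment I n)), Part.mem_some _, (hW _).trans hn⟩
    refine ⟨(g : ℕ →. ℕ), hg, trivial, fun _ _ _ => trivial, ?_⟩
    intro L hL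
    refine ⟨?_, ?_⟩
    · have h := hBc (canon L) (by rw [(canon_informant L).1]; exact hL)
      obtain ⟨n, e, -, he⟩ := h.exists
      exact ⟨e, he.trans (canon_informant L).1⟩
    · intro I _ hI
      refine ⟨?_, hBc I (by rw [hI.1]; exact hL)⟩
      intro s t hst e he e' he' x hx
      obtain rfl := Part.mem_some_iff.1 he
      obtain rfl := Part.mem_some_iff.1 he'
      refine ⟨fun hx' => hx.1 ?_, hx.2⟩
      rw [hW] at hx' ⊢
      rcases hx' with ⟨a, ha, rfl⟩ | ⟨h0, h⟩
      · have h1 := mem_posI_of_segment ha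
        have h2 := hx.2
        rw [hI.1] at h1
        rw [hI.2] at h2
        exact absurd h1 h2
      · exact Or.inr ⟨h0, fun a ha => h a (segment_mono I hst ha)⟩
  · rintro ⟨h, -, -, -, hlearn⟩
    have hBc : ∀ L ∈ class12, ∀ N, ∃ k ≥ N, ∃ e ∈ h (Encodable.encode (segment (canon L) k)),
        W e = L := by
      intro L hL N
      have h1 := ((hlearn L hL).2 (canon L) trivial (canon_informant L)).2
      obtain ⟨k, ⟨e, he, hWe⟩, hk⟩ := (h1.and (eventually_ge_atTop N)).exists
      exact ⟨k, hk, e, he, hWe.trans (canon_informant L).1⟩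
    obtain ⟨k, -, e, he, hWe⟩ := hBc X12 (Or.inl (Or.inl rfl)) 0
    obtain ⟨t, ht, e', he', hWe'⟩ := hBc (Y12 k) (Or.inl (Or.inr ⟨k, rfl⟩)) k
    have hZ : Z12 k (t + k + 1) ∈ class12 := Or.inr ⟨k, t + k + 1, by omega, rfl⟩
    have hmon := ((hlearn _ hZ).2 (canon _) trivial (canon_informant _)).1
    have s1 : segment (canon X12) k = segment (canon (Z12 k (t + k + 1))) k := by
      apply canon_segment
      intro x hx
      rw [mem_X, mem_Z]; omega
    have s2 : segment (canon (Y12 k)) t = segment (canon (Z12 k (t + k + 1))) t := by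
      apply canon_segment
      intro x hx
      rw [mem_Y, mem_Z]; omega
    rw [s1] at he
    rw [s2] at he'
    have hsub := hmon k t ht e he e' he'
    have hmem : 2 * (t + k + 1) ∈ W e ∩ posI (canon (Z12 k (t + k + 1))) := by
      rw [hWe, (canon_informant _).1]
      exact ⟨(mem_X _).2 (by omega), (mem_Z _ _ _).2 (Or.inl rfl)⟩
    have hfin := (hsub hmem).1
    rw [hWe', mem_Y] at hfin
    omega

end InfBc
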